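/- arXiv:1812.07389 — 2 statements merged into one kernel-verified Lean document; each statement's English description precedes it below -/
import Mathlib

section
/- Let H1 and H_LI be independent exponentially distributed random variables with means Ω1 > 0 and Ω_LI > 0, and let ρ > 0, 0 < a1 < 1. Then for every x ≥ 0 the random variable X = a1·ρ·H1/(ρ·H_LI + 1) has cumulative distribution function P(X ≤ x) = 1 − (a1·Ω1/(x·Ω_LI + a1·Ω1))·exp(−x/(a1·ρ·Ω1)). -/
open MeasureTheory ProbabilityTheory Real

lemma aux_map_eq {Ω : Type*} [MeasurableSpace Ω] (μ : Measure Ω) [IsProbabilityMeasure μ]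
    (H : Ω → ℝ) (hm : Measurable H) (m : ℝ) (hmpos : 0 < m)
    (hH : ∀ t : ℝ, 0 ≤ t → μ {ω | H ω > t} = ENNReal.ofReal (Real.exp (-(t / m)))) :
    μ.map H = expMeasure (1 / m) := by
  have hr : 0 < 1 / m := by positivity
  haveI := isProbabilityMeasure_expMeasure hr
  haveI : IsProbabilityMeasure (μ.map H) := Measure.isProbabilityMeasure_map hm.aemeasurable
  have key : ∀ t : ℝ, 0 ≤ t → μ (H ⁻¹' Set.Iic t) = ENNReal.ofReal (1 - Real.exp (-(t / m))) := by
    intro t ht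
    have h1 : H ⁻¹' Set.Iic t = {ω | H ω > t}ᶜ := by ext ω; simp
    rw [h1, prob_compl_eq_one_sub (measurableSet_lt measurable_const hm), hH t ht,
      ENNReal.ofReal_sub _ (Real.exp_pos _).le, ENNReal.ofReal_one]
  apply Measure.eq_of_cdf
  ext t
  rw [cdf_expMeasure_eq hr, cdf_eq_real, measureReal_def,
    Measure.map_apply hm measurableSet_Iic]
  split_ifs with ht
  · rw [key t ht, ENNReal.toReal_ofReal]
    · congr 3; ring
    · have : Real.exp (-(t / m)) ≤ 1 := Real.exp_le_one_iff.2 (by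
        have : 0 ≤ t / m := by positivity
        linarith)
      linarith
  · have h0 := key 0 le_rfl
    simp only [zero_div, neg_zero, Real.exp_zero, sub_self, ENNReal.ofReal_zero] at h0
    rw [measure_mono_null (Set.preimage_mono (Set.Iic_subset_Iic.2 (not_le.1 ht).le)) h0]
    simp

lemma aux_lintegral (r k d : ℝ) (hr : 0 < r) (hk : 0 ≤ k) :
    ∫⁻ y, ENNReal.ofReal (Real.exp (-(k * y + d))) ∂(expMeasure r)
      = ENNReal.ofReal (r / (r + k) * Real.exp (-d)) := by
  have hrk : 0 < r + k := by positivity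
  have hE : expMeasure r = volume.withDensity (exponentialPDF r) := rfl
  have hmeas : ∀ r, Measurable (exponentialPDF r) := fun r =>
    (measurable_exponentialPDFReal r).ennreal_ofReal
  rw [hE, lintegral_withDensity_eq_lintegral_mul _ (hmeas r) (by fun_prop)]
  have : ∀ y, (exponentialPDF r * fun y => ENNReal.ofReal (Real.exp (-(k * y + d)))) y
      = ENNReal.ofReal (r / (r + k) * Real.exp (-d)) * exponentialPDF (r + k) y := by
    intro y
    simp only [Pi.mul_apply]
    rcases lt_or_ge y 0 with hy | hy
    · rw [exponentialPDF_of_neg hy, exponentialPDF_of_neg hy]; simp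
    · rw [exponentialPDF_of_nonneg hy, exponentialPDF_of_nonneg hy,
        ← ENNReal.ofReal_mul (by positivity), ← ENNReal.ofReal_mul (by positivity)]
      congr 1
      have e1 : Real.exp (-(r * y)) * Real.exp (-(k * y + d))
          = Real.exp (-d) * Real.exp (-((r + k) * y)) := by
        rw [← Real.exp_add, ← Real.exp_add]; congr 1; ring
      calc _ = r * (Real.exp (-(r * y)) * Real.exp (-(k * y + d))) := by ring
        _ = _ := by rw [e1]; field_simp
  simp_rw [this]
  rw [lintegral_const_mul _ (hmeas _), lintegral_exponentialPDF_eq_one hrk, mul_one]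

/-- **CDF of the FD near-user post-SIC SINR.**
If `H1` and `HLI` are independent exponential random variables with means `Ω1` and `ΩLI`,
then `X = a1·ρ·H1/(ρ·HLI + 1)` has the stated cumulative distribution function. -/
theorem fd_near_user_sinr_cdf
    {Ω : Type*} [MeasurableSpace Ω] (μ : Measure Ω) [IsProbabilityMeasure μ]
    (H1 HLI : Ω → ℝ) (hH1m : Measurable H1) (hHLIm : Measurable HLI)
    (Ω1 ΩLI : ℝ) (hΩ1 : 0 < Ω1) (hΩLI : 0 < ΩLI)
    (hH1 : ∀ t : ℝ, 0 ≤ t → μ {ω | H1 ω > t} = ENNReal.ofReal (Real.exp (-(t / Ω1))))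
    (hHLI : ∀ t : ℝ, 0 ≤ t → μ {ω | HLI ω > t} = ENNReal.ofReal (Real.exp (-(t / ΩLI))))
    (hIndep : IndepFun H1 HLI μ)
    (ρ a1 : ℝ) (hρ : 0 < ρ) (ha1 : 0 < a1) (ha1' : a1 < 1) :
    ∀ x : ℝ, 0 ≤ x →
      (μ {ω | a1 * ρ * H1 ω / (ρ * HLI ω + 1) ≤ x}).toReal
        = 1 - a1 * Ω1 / (x * ΩLI + a1 * Ω1) * Real.exp (-(x / (a1 * ρ * Ω1))) := by
  intro x hx
  have hX : Measurable fun ω => a1 * ρ * H1 ω / (ρ * HLI ω + 1) := by fun_prop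
  have hpos : ∀ᵐ ω ∂μ, 0 < HLI ω := by
    have h0 := hHLI 0 le_rfl
    simp only [zero_div, neg_zero, Real.exp_zero, ENNReal.ofReal_one] at h0
    exact (mem_ae_iff_prob_eq_one (measurableSet_lt measurable_const hHLIm)).2 h0
  have hc : μ {ω | x < a1 * ρ * H1 ω / (ρ * HLI ω + 1)}
      = ENNReal.ofReal (a1 * Ω1 / (x * ΩLI + a1 * Ω1) * Real.exp (-(x / (a1 * ρ * Ω1)))) := by
    have hS : MeasurableSet {p : ℝ × ℝ | x * (ρ * p.1 + 1) / (a1 * ρ) < p.2} :=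
      measurableSet_lt (by fun_prop) (by fun_prop)
    have e1 : μ {ω | x < a1 * ρ * H1 ω / (ρ * HLI ω + 1)}
        = μ ((fun ω => (HLI ω, H1 ω)) ⁻¹' {p : ℝ × ℝ | x * (ρ * p.1 + 1) / (a1 * ρ) < p.2}) := by
      apply measure_congr
      filter_upwards [hpos] with ω hω
      apply propext
      change x < a1 * ρ * H1 ω / (ρ * HLI ω + 1) ↔ x * (ρ * HLI ω + 1) / (a1 * ρ) < H1 ω
      rw [lt_div_iff₀ (by positivity), div_lt_iff₀ (by positivity), mul_comm (H1 ω)]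
    rw [e1, ← Measure.map_apply (hHLIm.prodMk hH1m) hS,
      (indepFun_iff_map_prod_eq_prod_map_map hHLIm.aemeasurable hH1m.aemeasurable).1 hIndep.symm]
    haveI : IsProbabilityMeasure (μ.map H1) := Measure.isProbabilityMeasure_map hH1m.aemeasurable
    rw [Measure.prod_apply hS]
    have e2 : ∫⁻ y, (μ.map H1) (Prod.mk y ⁻¹' {p : ℝ × ℝ | x * (ρ * p.1 + 1) / (a1 * ρ) < p.2})
          ∂(μ.map HLI)
        = ∫⁻ y, ENNReal.ofReal (Real.exp (-(x / (a1 * Ω1) * y + x / (a1 * ρ * Ω1))))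
          ∂(μ.map HLI) := by
      apply lintegral_congr_ae
      have hpos' : ∀ᵐ y ∂(μ.map HLI), 0 < y :=
        (ae_map_iff hHLIm.aemeasurable measurableSet_Ioi).2 hpos
      filter_upwards [hpos'] with y hy
      rw [Measure.map_apply hH1m (measurable_prodMk_left hS)]
      refine (hH1 (x * (ρ * y + 1) / (a1 * ρ)) (by positivity)).trans ?_
      congr 3
      field_simp
    rw [e2, aux_map_eq μ HLI hHLIm ΩLI hΩLI hHLI,
      aux_lintegral _ _ _ (by positivity) (by positivity)]
    congr 2
    field_simp
    ring
  have h1 : {ω | a1 * ρ * H1 ω / (ρ * HLI ω + 1) ≤ x}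
      = {ω | x < a1 * ρ * H1 ω / (ρ * HLI ω + 1)}ᶜ := by ext ω; simp
  rw [h1, prob_compl_eq_one_sub (measurableSet_lt measurable_const hX),
    ENNReal.toReal_sub_of_le prob_le_one ENNReal.one_ne_top, hc,
    ENNReal.toReal_ofReal (by positivity), ENNReal.toReal_one]
end

section
/- Let H1 and H_LI be independent exponentially distributed random variables with means Ω1 > 0 and Ω_LI > 0, and let a1, a2 satisfy 0 < a1 < a2 and a1 + a2 = 1. Then for every y with 0 ≤ y < a2/a1, P( a2·H1/(a1·H1 + H_LI) > y ) = (a2 − y·a1)·Ω1 / ( (a2 − y·a1)·Ω1 + y·Ω_LI ), while for y ≥ a2/a1 this probability is 0. -/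
open MeasureTheory ProbabilityTheory Real

lemma aux_map_exp {Ω : Type*} [MeasurableSpace Ω] (μ : Measure Ω) [IsProbabilityMeasure μ]
    (H : Ω → ℝ) (hm : Measurable H) (m : ℝ) (hpos : 0 < m)
    (hH : ∀ t : ℝ, 0 ≤ t → μ {ω | H ω > t} = ENNReal.ofReal (Real.exp (-(t / m)))) :
    μ.map H = expMeasure (1 / m) := by
  have hr : 0 < 1 / m := by positivity
  haveI : IsProbabilityMeasure (μ.map H) := Measure.isProbabilityMeasure_map hm.aemeasurable
  haveI := isProbabilityMeasure_expMeasure hr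
  apply Measure.eq_of_cdf
  ext x
  have key : ∀ t : ℝ, 0 ≤ t → cdf (μ.map H) t = 1 - Real.exp (-(1 / m * t)) := by
    intro t ht
    rw [cdf_eq_real, measureReal_def, Measure.map_apply hm measurableSet_Iic]
    have h1 : H ⁻¹' Set.Iic t = {ω | H ω > t}ᶜ := by
      ext ω; simp
    have hms : MeasurableSet {ω | H ω > t} := measurableSet_lt measurable_const hm
    rw [h1, ← measureReal_def, probReal_compl_eq_one_sub hms, measureReal_def, hH t ht,
      ENNReal.toReal_ofReal (Real.exp_pos _).le]
    congr 3
    ring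
  rw [cdf_expMeasure_eq hr]
  split_ifs with h
  · exact key x h
  · apply le_antisymm
    · have h0 := key 0 le_rfl
      have := monotone_cdf (μ.map H) (not_le.mp h).le
      simp at h0
      linarith
    · exact cdf_nonneg _ _

lemma aux_laplace (r k : ℝ) (hr : 0 < r) (hk : 0 ≤ k) :
    ∫⁻ x, ENNReal.ofReal (Real.exp (-(k * x))) ∂(expMeasure r) = ENNReal.ofReal (r / (r + k)) := by
  have hs : 0 < r + k := by linarith
  have hm : Measurable (exponentialPDF r) := (measurable_exponentialPDFReal r).ennreal_ofReal
  have h0 : expMeasure r = volume.withDensity (exponentialPDF r) := rfl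
  rw [h0, lintegral_withDensity_eq_lintegral_mul _ hm (by fun_prop)]
  have h1 : ∀ x, (exponentialPDF r * fun x => ENNReal.ofReal (Real.exp (-(k * x)))) x
      = ENNReal.ofReal (r / (r + k)) * exponentialPDF (r + k) x := by
    intro x
    simp only [Pi.mul_apply]
    rcases lt_or_ge x 0 with hx | hx
    · simp [exponentialPDF_of_neg hx]
    · rw [exponentialPDF_of_nonneg hx, exponentialPDF_of_nonneg hx,
        ← ENNReal.ofReal_mul (by positivity), ← ENNReal.ofReal_mul (by positivity)]
      congr 1
      rw [mul_assoc, ← Real.exp_add, ← mul_assoc, div_mul_cancel₀ _ hs.ne']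
      congr 2
      ring
  simp_rw [h1]
  rw [lintegral_const_mul' _ _ ENNReal.ofReal_ne_top, lintegral_exponentialPDF_eq_one hs, mul_one]

lemma aux_pos {Ω : Type*} [MeasurableSpace Ω] (μ : Measure Ω) [IsProbabilityMeasure μ]
    (H : Ω → ℝ) (hm : Measurable H) (m : ℝ)
    (hH : ∀ t : ℝ, 0 ≤ t → μ {ω | H ω > t} = ENNReal.ofReal (Real.exp (-(t / m)))) :
    ∀ᵐ ω ∂μ, 0 < H ω := by
  have hms : MeasurableSet {ω | H ω > 0} := measurableSet_lt measurable_const hm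
  have := hH 0 le_rfl
  simp only [zero_div, neg_zero, Real.exp_zero, ENNReal.ofReal_one] at this
  exact (mem_ae_iff_prob_eq_one hms).2 this

/-- **Complementary CDF of the high-SNR SINR `a2·H1/(a1·H1 + H_LI)`.**
If `H1` and `HLI` are independent exponential random variables with means `Ω1` and `ΩLI`,
then for `0 ≤ y < a2/a1` the tail probability has the stated form, and it vanishes
for `y ≥ a2/a1`. -/
theorem fd_high_snr_sinr_ccdf
    {Ω : Type*} [MeasurableSpace Ω] (μ : Measure Ω) [IsProbabilityMeasure μ]
    (H1 HLI : Ω → ℝ) (hH1m : Measurable H1) (hHLIm : Measurable HLI)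
    (Ω1 ΩLI : ℝ) (hΩ1 : 0 < Ω1) (hΩLI : 0 < ΩLI)
    (hH1 : ∀ t : ℝ, 0 ≤ t → μ {ω | H1 ω > t} = ENNReal.ofReal (Real.exp (-(t / Ω1))))
    (hHLI : ∀ t : ℝ, 0 ≤ t → μ {ω | HLI ω > t} = ENNReal.ofReal (Real.exp (-(t / ΩLI))))
    (hIndep : IndepFun H1 HLI μ)
    (a1 a2 : ℝ) (ha1 : 0 < a1) (ha12 : a1 < a2) (hsum : a1 + a2 = 1) :
    (∀ y : ℝ, 0 ≤ y → y < a2 / a1 →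
        (μ {ω | a2 * H1 ω / (a1 * H1 ω + HLI ω) > y}).toReal
          = (a2 - y * a1) * Ω1 / ((a2 - y * a1) * Ω1 + y * ΩLI)) ∧
      (∀ y : ℝ, a2 / a1 ≤ y →
        (μ {ω | a2 * H1 ω / (a1 * H1 ω + HLI ω) > y}).toReal = 0) := by
  have hp1 := aux_pos μ H1 hH1m Ω1 hH1
  have hp2 := aux_pos μ HLI hHLIm ΩLI hHLI
  have hν := aux_map_exp μ HLI hHLIm ΩLI hΩLI hHLI
  refine ⟨fun y hy hya => ?_, fun y hya => ?_⟩
  · have hd : 0 < a2 - y * a1 := by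
      rw [lt_div_iff₀ ha1] at hya; linarith
    set c := y / (a2 - y * a1) with hc
    have hc0 : 0 ≤ c := div_nonneg hy hd.le
    have e1 : μ {ω | a2 * H1 ω / (a1 * H1 ω + HLI ω) > y} = μ {ω | c * HLI ω < H1 ω} := by
      apply measure_congr
      filter_upwards [hp1, hp2] with ω h1 h2
      have hden : 0 < a1 * H1 ω + HLI ω := by positivity
      refine propext ?_
      change y < a2 * H1 ω / (a1 * H1 ω + HLI ω) ↔ c * HLI ω < H1 ω
      rw [lt_div_iff₀ hden, hc, div_mul_eq_mul_div, div_lt_iff₀ hd]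
      constructor <;> intro h <;> linarith
    have hS : MeasurableSet {p : ℝ × ℝ | c * p.1 < p.2} :=
      measurableSet_lt (by fun_prop) (by fun_prop)
    have e2 : μ {ω | c * HLI ω < H1 ω}
        = ((μ.map HLI).prod (μ.map H1)) {p : ℝ × ℝ | c * p.1 < p.2} := by
      rw [← (indepFun_iff_map_prod_eq_prod_map_map hHLIm.aemeasurable hH1m.aemeasurable).1
        hIndep.symm, Measure.map_apply (hHLIm.prodMk hH1m) hS]
      rfl
    haveI : IsProbabilityMeasure (μ.map H1) := Measure.isProbabilityMeasure_map hH1m.aemeasurable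
    have hpν : ∀ᵐ x ∂(μ.map HLI), 0 < x :=
      (ae_map_iff hHLIm.aemeasurable measurableSet_Ioi).2 hp2
    have e3 : ((μ.map HLI).prod (μ.map H1)) {p : ℝ × ℝ | c * p.1 < p.2}
        = ∫⁻ x, ENNReal.ofReal (Real.exp (-(c / Ω1 * x))) ∂(μ.map HLI) := by
      rw [Measure.prod_apply hS]
      apply lintegral_congr_ae
      filter_upwards [hpν] with x hx
      rw [Measure.map_apply hH1m (measurable_prodMk_left hS)]
      have := hH1 (c * x) (by positivity)
      rw [show c / Ω1 * x = c * x / Ω1 by ring, ← this]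
      rfl
    have hr : 0 < 1 / ΩLI := by positivity
    rw [e1, e2, e3, hν, aux_laplace _ _ hr (by positivity), ENNReal.toReal_ofReal (by positivity),
      hc]
    have hD : 0 < (a2 - y * a1) * Ω1 + y * ΩLI := by positivity
    field_simp
  · have : μ {ω | a2 * H1 ω / (a1 * H1 ω + HLI ω) > y} = 0 := by
      rw [div_le_iff₀ ha1] at hya
      refine measure_eq_zero_iff_ae_notMem.2 ?_
      filter_upwards [hp1, hp2] with ω h1 h2
      have hden : 0 < a1 * H1 ω + HLI ω := by positivity
      have hy0 : 0 < y := by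
        by_contra hcon
        nlinarith
      change ¬ (y < a2 * H1 ω / (a1 * H1 ω + HLI ω))
      rw [lt_div_iff₀ hden]
      nlinarith [mul_pos hy0 h2, mul_le_mul_of_nonneg_right hya h1.le]
    simp [this]
end
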